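/- Let G be a finite soluble group with all Sylow subgroups of nilpotency class at most 2 that is 2-nilpotent (has a normal 2-complement). Then G is an IYB-group. -/

import Mathlib

/-- A finite group is an IYB-group iff it is the multiplicative group of a left
brace, i.e. there is an abelian group operation `+` on `G` with
`a(b + c) = ab − a + ac`. -/
def IsIYB (G : Type*) [Group G] : Prop :=
  ∃ (add : G → G → G) (neg : G → G) (zero : G),
    (∀ a b, add a b = add b a) ∧
    (∀ a b c, add (add a b) c = add a (add b c)) ∧
    (∀ a, add zero a = a) ∧
    (∀ a, add (neg a) a = zero) ∧
    (∀ a b c : G, a * add b c = add (add (a * b) (neg a)) (a * c))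

/-!
A `p`-group `P` of class at most two is abelian under `a + b = β(a, b)⁻¹ a b` as soon as its
commutator is split as `⁅a, b⁆ = β(a, b) / β(b, a)` with `β` bimultiplicative and central, and the
identity of `P` is then a bijective cocycle. For odd `p` the choice `β(a, b) = ⁅a, b⁆^(1/2)` is
invariant under all automorphisms; for `p = 2` the triangular part of the commutator form on
`P/P'` is still invariant under inner automorphisms. If `G` modulo a normal `p'`-subgroup is a
semidirect product `P ⋊ C`, this gives a cocycle of `G` whose kernel has no elements of order `p`,
and the product of these cocycles over all `p` is bijective, which is what a left brace is.

For `p = 2` the required semidirect decomposition is `2`-nilpotency. For odd `p` it is `p`-length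
one, proved by induction along a minimal normal subgroup `W`. Since `P` has class at most two,
`x ∈ P` acts on a `p`-subgroup `W` with `(x - 1)² = 0`. Let `x` normalize an odd `p'`-group `D` of
class at most two, acting on `W`, and let `y` be the conjugate of `x` by an element of `D`. Then
`z = x⁻¹y` and `u = yx⁻¹` lie in `D` and satisfy `z + z⁻¹ = u + u⁻¹`. This forces `z` and `u` to
commute, so `z - 1` is nilpotent and `z = 1`: hence `x` centralizes `D`. In a soluble linear group
without normal `p`-subgroups this leaves only `x = 1`, so the normal closure of `P` centralizes `W`.
-/

open scoped commutatorElement IsMulCommutative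

section Unipotent

variable {E : Type*} [Ring E]

theorem units_val_inv_eq_two_sub {x : Eˣ} (hx : ((x : E) - 1) ^ 2 = 0) : (↑x⁻¹ : E) = 2 - x :=
  Units.inv_eq_of_mul_eq_one_right <| by linear_combination (norm := noncomm_ring) -hx

theorem inv_mul_add_inv_eq_mul_inv_add_inv {x y : Eˣ} (hx : ((x : E) - 1) ^ 2 = 0)
    (hy : ((y : E) - 1) ^ 2 = 0) :
    (↑(x⁻¹ * y) + ↑(x⁻¹ * y)⁻¹ : E) = ↑(y * x⁻¹) + ↑(y * x⁻¹)⁻¹ := by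
  simp only [Units.val_mul, mul_inv_rev, inv_inv, units_val_inv_eq_two_sub hx,
    units_val_inv_eq_two_sub hy]
  noncomm_ring

theorem isNilpotent_one_sub_mul_one_add_sub_one {a b : E} (h2 : IsUnit (2 : E))
    (ha : a ^ 2 = 0) (hb : b ^ 2 = 0)
    (h : Commute ((1 - a) * (1 + b)) ((1 + b) * (1 - a))) :
    IsNilpotent ((1 - a) * (1 + b) - 1) := by
  have haba : a * b * a + b * a * b = 0 := by
    rw [← h2.mul_right_eq_zero]
    linear_combination (norm := noncomm_ring)
      h.eq + ha * b + b * ha + a * hb + hb * a + b * ha * b - a * hb * a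
  have habab : a * b * a * b = 0 := by
    linear_combination (norm := noncomm_ring) a * haba - ha * b * a
  have hbaba : b * a * b * a = 0 := by
    linear_combination (norm := noncomm_ring) b * haba - hb * a * b
  have hsq : ((1 - a) * (1 + b) - 1) ^ 2 = -(a * b + b * a + 2 * (b * a * b)) := by
    linear_combination (norm := noncomm_ring) habab + haba + ha + hb + ha * b - a * hb
  refine ⟨4, ?_⟩
  rw [show 4 = 2 * 2 from rfl, pow_mul, hsq]
  linear_combination (norm := noncomm_ring) habab + hbaba + a * hb * a + b * ha * b
    + 4 * hbaba * b + 2 * b * a * hb * a + 2 * a * hb * a * b + 4 * b * a * hb * a * b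

theorem isNilpotent_inv_mul_sub_one {x y : Eˣ} (h2 : IsUnit (2 : E))
    (hx : ((x : E) - 1) ^ 2 = 0) (hy : ((y : E) - 1) ^ 2 = 0)
    (h : Commute (x⁻¹ * y) (y * x⁻¹)) : IsNilpotent (↑(x⁻¹ * y) - 1 : E) := by
  have hx' : (↑x⁻¹ : E) = 1 - (x - 1) := by
    rw [units_val_inv_eq_two_sub hx, ← one_add_one_eq_two]
    abel
  have hy' : (y : E) = 1 + (y - 1) := by abel
  have hxy : (↑(x⁻¹ * y) : E) = (1 - (x - 1)) * (1 + (y - 1)) := by rw [Units.val_mul, hx', ← hy']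
  have hyx : (↑(y * x⁻¹) : E) = (1 + (y - 1)) * (1 - (x - 1)) := by rw [Units.val_mul, hx', ← hy']
  rw [hxy]
  refine isNilpotent_one_sub_mul_one_add_sub_one h2 hx hy ?_
  rw [← hxy, ← hyx]
  exact h.units_val

theorem sub_one_mul_sq_sub_inv {u f c : Eˣ} (h : Commute (u : E) (f + ↑f⁻¹)) (hcf : Commute c f)
    (hc : u * f = c * f * u) : ((c : E) - 1) * (f ^ 2 - ↑c⁻¹) = 0 := by
  have hc' : u * f⁻¹ = (c * f)⁻¹ * u := by
    rw [eq_inv_mul_iff_mul_eq, ← mul_assoc, ← hc, mul_inv_cancel_right]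
  have hadd : (f : E) + ↑f⁻¹ = c * f + ↑(c * f)⁻¹ := by
    refine u.isUnit.mul_left_injective ?_
    simp only [add_mul, ← h.eq, mul_add]
    exact congrArg₂ (· + ·) (mod_cast hc) (mod_cast hc')
  have hinv : ↑(c * f)⁻¹ * (f : E) = ↑c⁻¹ := by
    rw [hcf.eq, mul_inv_rev, ← Units.val_mul, inv_mul_cancel_right]
  linear_combination (norm := noncomm_ring) f.inv_mul - hinv - hadd * f - c.mul_inv

variable (p : ℕ) [Fact p.Prime] [CharP E p]

theorem eq_one_of_isNilpotent_sub_one {u : Eˣ} (h : IsNilpotent ((u : E) - 1))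
    (hu : (orderOf u).Coprime p) : u = 1 := by
  obtain ⟨n, hn⟩ := h
  have hpow : u ^ p ^ n = 1 := by
    have := pow_eq_zero_of_le (Nat.lt_pow_self (Fact.out : p.Prime).one_lt).le hn
    rwa [sub_pow_char_pow_of_commute p n (Commute.one_right _), one_pow, sub_eq_zero,
      ← Units.val_pow_eq_pow_val, Units.val_eq_one] at this
  rw [← orderOf_eq_one_iff]
  exact Nat.eq_one_of_dvd_coprimes (hu.pow_right n) dvd_rfl (orderOf_dvd_of_pow_eq_one hpow)

theorem commute_of_add_inv_eq {e f : Eˣ} (h : (e : E) + ↑e⁻¹ = f + ↑f⁻¹)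
    (hce : Commute ⁅e, f⁆ e) (hcf : Commute ⁅e, f⁆ f) (hodd : Odd (orderOf ⁅e, f⁆))
    (hp : (orderOf ⁅e, f⁆).Coprime p) : Commute e f := by
  have he : Commute (e : E) (f + ↑f⁻¹) := by
    rw [← h]
    exact (Commute.refl _).add_right (by simp [Commute, SemiconjBy])
  set c := ⁅e, f⁆ with hc
  have hconj : e * f = c * f * e := by simp [hc, commutatorElement_def]
  have hconj' : e⁻¹ * f = c⁻¹ * f * e⁻¹ := by
    rw [eq_mul_inv_iff_mul_eq, mul_assoc, inv_mul_eq_iff_eq_mul, ← mul_assoc, ← hce.inv_left.eq,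
      mul_assoc c⁻¹, hconj, mul_assoc c, inv_mul_cancel_left]
  have h₁ := sub_one_mul_sq_sub_inv he hcf hconj
  have h₂ := sub_one_mul_sq_sub_inv he.units_inv_left hcf.inv_left hconj'
  rw [inv_inv] at h₂
  have hcube : ((c : E) - 1) * (c ^ 2 - 1) = 0 := by
    linear_combination (norm := noncomm_ring)
      h₁ * c + c * h₂ * c - c.mul_inv * (f ^ 2 * c - c ^ 2) + (c - 1) * c.inv_mul
  have hsq : c ^ 2 = 1 := by
    refine eq_one_of_isNilpotent_sub_one p ⟨2, ?_⟩ (hp.of_dvd_left (orderOf_pow_dvd 2))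
    rw [Units.val_pow_eq_pow_val]
    linear_combination (norm := noncomm_ring) (c + 1) * hcube
  rw [← commutatorElement_eq_one_iff_commute, ← hc, ← orderOf_eq_one_iff]
  exact Nat.eq_one_of_dvd_coprimes hodd.coprime_two_right dvd_rfl (orderOf_dvd_of_pow_eq_one hsq)

theorem commute_of_quadratic_of_mem_normalizer (hp2 : p ≠ 2) {D : Subgroup Eˣ}
    (hodd : Odd (Nat.card D)) (hpD : ¬ p ∣ Nat.card D) (hD : D.lowerCentralSeries 2 = ⊥)
    {x : Eˣ} (hx : ((x : E) - 1) ^ 2 = 0)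
    (hxD : x ∈ Subgroup.normalizer (D : Set Eˣ)) {g : Eˣ} (hg : g ∈ D) : Commute x g := by
  set y := g * x * g⁻¹ with hy
  have hyx : y - 1 = g * (x - 1 : E) * ↑g⁻¹ := by simp [hy, mul_sub, sub_mul]
  have hysq : ((y : E) - 1) ^ 2 = 0 := by
    rw [hyx]
    linear_combination (norm := noncomm_ring)
      g * (x - 1 : E) * g.inv_mul * (x - 1 : E) * ↑g⁻¹ + g * hx * ↑g⁻¹
  have hz : x⁻¹ * y ∈ D := by
    have := D.mul_mem ((Subgroup.mem_normalizer_iff''.1 hxD g).1 hg) (D.inv_mem hg)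
    simpa only [hy, mul_assoc] using this
  have hu : y * x⁻¹ ∈ D := by
    simpa [mul_assoc] using (Subgroup.mem_normalizer_iff.1 hxD _).1 hz
  have hord {d : Eˣ} (hd : d ∈ D) : Odd (orderOf d) ∧ (orderOf d).Coprime p := by
    have := D.orderOf_dvd_natCard hd
    refine ⟨hodd.of_dvd_nat this, ?_⟩
    exact (((Fact.out : p.Prime).coprime_iff_not_dvd.2 hpD).of_dvd_right this).symm
  have hmem := Subgroup.commutator_mem_commutator hz hu
  have hcomm {d : Eˣ} (hd : d ∈ D) : Commute ⁅x⁻¹ * y, y * x⁻¹⁆ d :=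
    commutatorElement_eq_one_iff_commute.1 <| Subgroup.mem_bot.1 <|
      hD.le <| Subgroup.commutator_mem_commutator hmem hd
  obtain ⟨hcodd, hcp⟩ := hord (Subgroup.commutator_le_self D hmem)
  have hzu : Commute (x⁻¹ * y) (y * x⁻¹) := commute_of_add_inv_eq p
    (inv_mul_add_inv_eq_mul_inv_add_inv hx hysq) (hcomm hz) (hcomm hu) hcodd hcp
  have htwo : IsUnit (2 : E) := by
    simpa [Nat.prime_dvd_prime_iff_eq Fact.out Nat.prime_two, hp2] using
      CharP.isUnit_natCast_iff (R := E) (n := 2) (Fact.out : p.Prime)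
  have hxy : x⁻¹ * y = 1 := eq_one_of_isNilpotent_sub_one p
    (isNilpotent_inv_mul_sub_one htwo hx hysq hzu) (hord hz).2
  rw [inv_mul_eq_one, eq_mul_inv_iff_mul_eq] at hxy
  exact hxy

end Unipotent

section Solvable

variable {L : Type*} [Group L] [Finite L]

theorem commutator_eq_bot_of_forall_class_le_two [Group.IsSolvable L] {N : Subgroup L} [N.Normal]
    (h : ∀ D ≤ N, D.Normal → D.lowerCentralSeries 2 = ⊥ → ⁅N, D⁆ = ⊥) : ⁅N, N⁆ = ⊥ := by
  suffices ∀ D ≤ N, D.Normal → ⁅N, D⁆ = ⊥ from this N le_rfl inferInstance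
  intro D
  induction D using WellFoundedLT.induction with | ind D ih
  intro hDN hD
  rcases eq_or_ne D ⊥ with rfl | hbot
  · exact Subgroup.commutator_bot_right N
  have hlt := Group.IsSolvable.commutator_lt_of_ne_bot hbot
  refine h D hDN hD (le_bot_iff.1 ?_)
  calc D.lowerCentralSeries 2 ≤ ⁅⁅D, D⁆, N⁆ := Subgroup.commutator_mono le_rfl hDN
    _ = ⁅N, ⁅D, D⁆⁆ := Subgroup.commutator_comm _ _
    _ = ⊥ := ih _ hlt (hlt.le.trans hDN) inferInstance

variable (p : ℕ) [Fact p.Prime]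

theorem not_dvd_card_of_isNilpotent (hL : ∀ D : Subgroup L, D.Normal → IsPGroup p D → D = ⊥)
    (D : Subgroup L) [D.Normal] [Group.IsNilpotent D] : ¬ p ∣ Nat.card D := by
  intro hdvd
  let P : Sylow p D := default
  have : (P : Subgroup D).Characteristic := P.characteristic_of_normal inferInstance
  have hP := hL ((P : Subgroup D).map D.subtype) inferInstance (P.isPGroup'.map _)
  rw [Subgroup.map_eq_bot_iff_of_injective _ D.subtype_injective] at hP
  exact P.ne_bot_of_dvd_card hdvd hP

theorem eq_one_of_sub_one_sq_eq_zero [Group.IsSolvable L] (hp : p ≠ 2)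
    (hL : ∀ D : Subgroup L, D.Normal → IsPGroup p D → D = ⊥) {E : Type*} [Ring E] [CharP E p]
    {ρ : L →* Eˣ} (hρ : Function.Injective ρ) {x : L} (hx : ((ρ x : E) - 1) ^ 2 = 0)
    (hodd : Odd (Nat.card (Subgroup.normalClosure {x}))) : x = 1 := by
  set N := Subgroup.normalClosure {x} with hN
  have hxN : x ∈ N := Subgroup.subset_normalClosure rfl
  have hcop (D : Subgroup L) [D.Normal] (hD : D.lowerCentralSeries 2 = ⊥) : ¬ p ∣ Nat.card D :=
    have : Group.IsNilpotent D := (Subgroup.isNilpotent_iff_lowerCentralSeries _).2 ⟨2, hD⟩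
    not_dvd_card_of_isNilpotent p hL D
  have hcent (D) (hDN : D ≤ N) (hDn : D.Normal) (hD : D.lowerCentralSeries 2 = ⊥) :
      ⁅N, D⁆ = ⊥ := by
    rw [Subgroup.commutator_eq_bot_iff_le_centralizer, hN]
    refine Subgroup.normalClosure_le_normal (Set.singleton_subset_iff.2 fun d hd ↦ ?_)
    have hcard : Nat.card (D.map ρ) = Nat.card D := Subgroup.card_map_of_injective hρ
    refine (Commute.of_map hρ (commute_of_quadratic_of_mem_normalizer p hp (D := D.map ρ)
      ?_ ?_ ?_ hx ?_ (Subgroup.mem_map_of_mem ρ hd))).symm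
    · rw [hcard]
      exact hodd.of_dvd_nat (Subgroup.card_dvd_of_le hDN)
    · rw [hcard]
      exact hcop D hD
    · rw [← Subgroup.map_lowerCentralSeries, hD, Subgroup.map_bot]
    · exact D.le_normalizer_map ρ ⟨x, by simp [D.normalizer_eq_top], rfl⟩
  have hNN : N.lowerCentralSeries 2 = ⊥ := by
    rw [← le_bot_iff, ← commutator_eq_bot_of_forall_class_le_two hcent]
    exact Subgroup.commutator_le_left _ _
  refine hρ ((eq_one_of_isNilpotent_sub_one p ⟨2, hx⟩ ?_).trans (map_one ρ).symm)
  rw [orderOf_injective ρ hρ]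
  exact (((Fact.out : p.Prime).coprime_iff_not_dvd.2 (hcop N hNN)).of_dvd_right
    (N.orderOf_dvd_natCard hxN)).symm

end Solvable

section Irreducible

theorem charP_addMonoidEnd (V : Type*) [AddCommGroup V] :
    CharP (AddMonoid.End V) (AddMonoid.exponent V) where
  cast_eq_zero_iff n := by
    rw [AddMonoid.exponent_dvd_iff_forall_nsmul_eq_zero, DFunLike.ext_iff]
    rfl

variable {L A : Type*} [Group L]

theorem eq_bot_of_isPGroup_of_irreducible [Group A] [Finite A] [MulDistribMulAction L A]
    [FaithfulSMul L A]
    (hirr : ∀ M : Subgroup A, (∀ l : L, ∀ m ∈ M, l • m ∈ M) → M = ⊥ ∨ M = ⊤)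
    (p : ℕ) [Fact p.Prime] (hA : p ∣ Nat.card A) (D : Subgroup L) [hDn : D.Normal]
    (hD : IsPGroup p D) : D = ⊥ := by
  have hfix : FixedPoints.subgroup D A = ⊥ ∨ FixedPoints.subgroup D A = ⊤ := by
    refine hirr _ fun l m hm d ↦ ?_
    have h := hm ⟨l⁻¹ * d * l, by simpa using hDn.conj_mem d d.2 l⁻¹⟩
    rw [Subgroup.mk_smul] at h
    rw [Subgroup.smul_def, ← mul_smul]
    calc ((d : L) * l) • m = l • (l⁻¹ * d * l) • m := by rw [← mul_smul]; group
      _ = l • m := by rw [h]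
  rcases hfix with h | h
  · obtain ⟨b, hb, hb1⟩ := hD.exists_fixed_point_of_prime_dvd_card_of_fixed_point A hA
      (a := (1 : A)) fun d ↦ smul_one d
    have hb : b ∈ FixedPoints.subgroup D A := hb
    rw [h, Subgroup.mem_bot] at hb
    exact absurd hb.symm hb1
  · refine (Subgroup.eq_bot_iff_forall D).2 fun d hd ↦ eq_of_smul_eq_smul (α := A) fun a ↦ ?_
    have ha : a ∈ FixedPoints.subgroup D A := h ▸ Subgroup.mem_top a
    rw [one_smul]
    exact ha ⟨d, hd⟩

theorem eq_one_of_quadratic_of_irreducible [Finite L] [Group.IsSolvable L] [CommGroup A] [Finite A]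
    [MulDistribMulAction L A] [FaithfulSMul L A]
    (hirr : ∀ M : Subgroup A, (∀ l : L, ∀ m ∈ M, l • m ∈ M) → M = ⊥ ∨ M = ⊤)
    (p : ℕ) [Fact p.Prime] (hp : p ≠ 2) (hA : Monoid.exponent A = p) {x : L}
    (hx : ∀ a : A, x • x • a * a = x • a * x • a)
    (hodd : Odd (Nat.card (Subgroup.normalClosure {x}))) : x = 1 := by
  have : CharP (AddMonoid.End (Additive A)) p := by
    rw [← hA, ← AddMonoid.exponent_additive]
    exact charP_addMonoidEnd _
  have hpA : p ∣ Nat.card A := hA ▸ Group.exponent_dvd_nat_card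
  let φ : L →* AddMonoid.End (Additive A) :=
    (monoidEndToAdditive A).toMonoidHom.comp (MulDistribMulAction.toMonoidEnd L A)
  have hφ : Function.Injective φ.toHomUnits := fun l m h ↦
    eq_of_smul_eq_smul (α := A) fun a ↦ DFunLike.congr_fun (congrArg Units.val h) a
  refine eq_one_of_sub_one_sq_eq_zero p hp
    (fun D _ hD ↦ eq_bot_of_isPGroup_of_irreducible hirr p hpA D hD) hφ ?_ hodd
  have h : φ x * φ x + 1 = φ x + φ x := AddMonoidHom.ext hx
  change (φ x - 1) ^ 2 = 0
  calc (φ x - 1) ^ 2 = φ x * φ x + 1 - (φ x + φ x) := by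
        rw [sq, sub_mul, mul_sub_one, one_mul]; abel
    _ = 0 := sub_eq_zero.2 h

end Irreducible

section MinimalNormal

variable {G : Type*} [Group G] {W : Subgroup G}

theorem eq_bot_or_eq_top_of_minimal (hW : Minimal (fun M : Subgroup G ↦ M.Normal ∧ M ≠ ⊥) W)
    {M : Subgroup W} (hM : (M.map W.subtype).Normal) : M = ⊥ ∨ M = ⊤ := by
  refine or_iff_not_imp_left.2 fun hbot ↦ Subgroup.map_injective W.subtype_injective ?_
  rw [← MonoidHom.range_eq_map, W.range_subtype]
  refine hW.eq_of_le ⟨hM, fun h ↦ hbot ?_⟩ (Subgroup.map_subtype_le M)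
  exact (Subgroup.map_eq_bot_iff_of_injective M W.subtype_injective).1 h

theorem isMulCommutative_of_minimal [Group.IsSolvable G]
    (hW : Minimal (fun M : Subgroup G ↦ M.Normal ∧ M ≠ ⊥) W) : IsMulCommutative W := by
  have := hW.prop.1
  have hlt := Group.IsSolvable.commutator_lt_of_ne_bot hW.prop.2
  rw [← Subgroup.commutator_self_eq_bot_iff]
  by_contra hbot
  exact hW.not_prop_of_lt hlt ⟨inferInstance, hbot⟩

theorem exists_prime_exponent_of_characteristic {A : Type*} [CommGroup A] [Finite A] [Nontrivial A]
    (h : ∀ M : Subgroup A, M.Characteristic → M = ⊥ ∨ M = ⊤) :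
    ∃ r, r.Prime ∧ Monoid.exponent A = r := by
  obtain ⟨r, hr, hdvd⟩ := Nat.exists_prime_and_dvd (Finite.one_lt_card (α := A)).ne'
  have : Fact r.Prime := ⟨hr⟩
  have hchar : (powMonoidHom r : A →* A).ker.Characteristic :=
    ⟨fun φ ↦ by ext; simp [← map_pow]⟩
  rcases h _ hchar with hbot | htop
  · obtain ⟨a, ha⟩ := exists_prime_orderOf_dvd_card' r hdvd
    have har : a ∈ (powMonoidHom r : A →* A).ker := by simp [← ha, pow_orderOf_eq_one]
    rw [hbot, Subgroup.mem_bot] at har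
    rw [har, orderOf_one] at ha
    exact absurd ha hr.one_lt.ne
  · refine ⟨r, hr, (Monoid.exponent_eq_prime_iff hr).2 fun a ha ↦ orderOf_eq_prime ?_ ha⟩
    exact MonoidHom.mem_ker.1 (htop ▸ Subgroup.mem_top a : a ∈ (powMonoidHom r : A →* A).ker)

theorem exists_prime_exponent_of_minimal [Finite G] [Group.IsSolvable G]
    (hW : Minimal (fun M : Subgroup G ↦ M.Normal ∧ M ≠ ⊥) W) :
    ∃ r, r.Prime ∧ Monoid.exponent W = r := by
  have := hW.prop.1
  have := isMulCommutative_of_minimal hW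
  have : Nontrivial W := (Subgroup.nontrivial_iff_ne_bot W).2 hW.prop.2
  exact exists_prime_exponent_of_characteristic fun M _ ↦
    eq_bot_or_eq_top_of_minimal hW inferInstance

end MinimalNormal

section PLength

variable {G : Type*} [Group G]

theorem le_of_coprime_card_index {N K : Subgroup G} [N.Normal]
    (h : (Nat.card K).Coprime N.index) : K ≤ N := by
  intro k hk
  rw [← QuotientGroup.eq_one_iff, ← orderOf_eq_one_iff]
  exact Nat.eq_one_of_dvd_coprimes h
    ((orderOf_map_dvd (QuotientGroup.mk' N) k).trans (K.orderOf_dvd_natCard hk))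
    (orderOf_dvd_natCard _)

theorem conj_conj_mul_eq_of_commute {x w : G} (hx : Commute ⁅x, w⁆ x) (hw : Commute ⁅x, w⁆ w) :
    x * (x * w * x⁻¹) * x⁻¹ * w = x * w * x⁻¹ * (x * w * x⁻¹) := by
  have hconj : x * w * x⁻¹ = ⁅x, w⁆ * w := by simp [commutatorElement_def]
  calc x * (x * w * x⁻¹) * x⁻¹ * w = ⁅x, w⁆ * (x * w * x⁻¹) * w := by
        rw [hconj, ← mul_assoc x, ← hx.eq, mul_assoc _ x, mul_assoc _ _ x⁻¹, hconj]
    _ = x * w * x⁻¹ * (x * w * x⁻¹) := by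
        rw [hconj, mul_assoc, mul_assoc, hw.left_comm, mul_assoc]

variable [Finite G]

theorem normalClosure_sylow_le_centralizer [Group.IsSolvable G] (p : ℕ) [Fact p.Prime]
    (P : Sylow p G) (hP : (P : Subgroup G).lowerCentralSeries 2 = ⊥)
    (hodd : Odd (Nat.card (Subgroup.normalClosure (P : Set G)))) {W : Subgroup G}
    (hW : Minimal (fun M : Subgroup G ↦ M.Normal ∧ M ≠ ⊥) W) (hWp : Monoid.exponent W = p) :
    Subgroup.normalClosure (P : Set G) ≤ Subgroup.centralizer (W : Set G) := by
  have := hW.prop.1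
  have := isMulCommutative_of_minimal hW
  have hWP : W ≤ P :=
    (IsPGroup.of_exponent_dvd_pow (n := 1) (by rw [hWp, pow_one])).le_sylow_of_normal P
  have hp : p ≠ 2 := by
    rintro rfl
    have h2 : 2 ∣ Nat.card W := hWp ▸ Group.exponent_dvd_nat_card
    exact (Nat.not_even_iff_odd.2 hodd) (even_iff_two_dvd.2 (h2.trans
      (Subgroup.card_dvd_of_le (hWP.trans Subgroup.subset_normalClosure))))
  refine Subgroup.normalClosure_le_normal fun x hx ↦ ?_
  let L : Subgroup (MulAut W) := (MulAut.conjNormal : G →* MulAut W).range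
  let π : G →* L := MonoidHom.rangeRestrict MulAut.conjNormal
  have hπ : Function.Surjective π := MonoidHom.rangeRestrict_surjective _
  have hπval (g : G) (w : W) : ((π g • w : W) : G) = g * w * g⁻¹ := MulAut.conjNormal_apply g w
  have : Group.IsSolvable L := Group.isSolvable_of_surjective hπ
  suffices π x = 1 by
    refine Subgroup.mem_centralizer_iff.2 fun w hw ↦ ?_
    have h := hπval x ⟨w, hw⟩
    rw [this, one_smul, eq_mul_inv_iff_mul_eq] at h
    exact h
  refine eq_one_of_quadratic_of_irreducible (A := W)
    (fun M hM ↦ eq_bot_or_eq_top_of_minimal hW ⟨?_⟩) p hp hWp ?_ ?_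
  · rintro _ ⟨m, hm, rfl⟩ g
    exact ⟨π g • m, hM (π g) m hm, hπval g m⟩
  · intro w
    have hcomm (y) (hy : y ∈ P) : Commute ⁅x, (w : G)⁆ y := by
      rw [← commutatorElement_eq_one_iff_commute, ← Subgroup.mem_bot, ← hP]
      exact Subgroup.commutator_mem_commutator (Subgroup.commutator_mem_commutator hx (hWP w.2)) hy
    ext
    simp only [Subgroup.coe_mul, hπval]
    exact conj_conj_mul_eq_of_commute (hcomm x hx) (hcomm w (hWP w.2))
  · refine hodd.of_dvd_nat ((Subgroup.card_dvd_of_le ?_).trans (Subgroup.card_map_dvd _ π))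
    rw [Subgroup.map_normalClosure _ _ hπ]
    exact Subgroup.normalClosure_mono (Set.singleton_subset_iff.2 ⟨x, hx, rfl⟩)

theorem exists_characteristic_sup_eq_top_of_le_center (p : ℕ) [Fact p.Prime] {W : Subgroup G}
    (hW : W ≤ Subgroup.center G) (hWp : IsPGroup p W) (hidx : ¬ p ∣ W.index) :
    ∃ C : Subgroup G, C.Characteristic ∧ ¬ p ∣ Nat.card C ∧ C ⊔ W = ⊤ := by
  let P : Sylow p G := hWp.toSylow hidx
  have hP : Subgroup.normalizer (P : Set G) ≤ Subgroup.centralizer (P : Set G) := by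
    have : Subgroup.centralizer (P : Set G) = ⊤ := Subgroup.centralizer_eq_top_iff_subset.2 hW
    exact this ▸ le_top
  have hC := MonoidHom.ker_transferSylow_isComplement' P hP
  have hpC := MonoidHom.not_dvd_card_ker_transferSylow P hP
  refine ⟨_, Subgroup.characteristic_iff_map_le.2 fun φ ↦ le_of_coprime_card_index ?_, hpC,
    hC.sup_eq_top⟩
  obtain ⟨n, hn⟩ := IsPGroup.iff_card.1 P.isPGroup'
  rw [hC.symm.index_eq_card, hn]
  exact (((Fact.out : p.Prime).coprime_iff_not_dvd.2 hpC).of_dvd_right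
    (Subgroup.card_map_dvd _ _)).symm.pow_right n

theorem exists_normal_sup_eq_of_le_centralizer (p : ℕ) [Fact p.Prime] {W K : Subgroup G} [K.Normal]
    (hWK : W ≤ K) (hKW : K ≤ Subgroup.centralizer (W : Set G)) (hWp : IsPGroup p W)
    (hidx : ¬ p ∣ W.relIndex K) :
    ∃ C : Subgroup G, C.Normal ∧ ¬ p ∣ Nat.card C ∧ C ⊔ W = K := by
  have hcent : W.subgroupOf K ≤ Subgroup.center K := fun w hw ↦
    Subgroup.mem_center_iff.2 fun k ↦ Subtype.ext
      (Subgroup.mem_centralizer_iff.1 (hKW k.2) w hw).symm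
  obtain ⟨C, _, hpC, hCW⟩ :=
    exists_characteristic_sup_eq_top_of_le_center p hcent hWp.comap_subtype hidx
  refine ⟨C.map K.subtype, inferInstance, ?_, ?_⟩
  · rwa [Subgroup.card_map_of_injective K.subtype_injective]
  · rw [← Subgroup.map_subgroupOf_eq_of_le hWK, ← Subgroup.map_sup, hCW,
      ← MonoidHom.range_eq_map, K.range_subtype]

/-- `G` has `p`-length at most one: `O_{p'}(G)P` is normal in `G` for the Sylow `p`-subgroup `P`.
Any normal `p'`-subgroup `K` with `KP` normal will do in place of `O_{p'}(G)`. -/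
def HasPLengthLeOne {p : ℕ} (P : Sylow p G) : Prop :=
  ∃ K : Subgroup G, K.Normal ∧ ¬ p ∣ Nat.card K ∧ (K ⊔ P).Normal

variable {p : ℕ} [Fact p.Prime] {P : Sylow p G} {W : Subgroup G} [W.Normal]

theorem HasPLengthLeOne.exists_of_quotient
    (h : HasPLengthLeOne (P.mapSurjective (QuotientGroup.mk'_surjective W))) :
    ∃ K : Subgroup G, K.Normal ∧ W ≤ K ∧ ¬ p ∣ Nat.card (K.map (QuotientGroup.mk' W)) ∧
      (K ⊔ P).Normal := by
  obtain ⟨K, _, hpK, hKP⟩ := h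
  have hWK : W ≤ K.comap (QuotientGroup.mk' W) := by
    simpa using (QuotientGroup.mk' W).ker_le_comap K
  refine ⟨K.comap (QuotientGroup.mk' W), inferInstance, hWK, ?_, ?_⟩
  · rwa [Subgroup.map_comap_eq_self_of_surjective (QuotientGroup.mk'_surjective W)]
  · have heq : K.comap (QuotientGroup.mk' W) ⊔ P =
        (K ⊔ (P : Subgroup G).map (QuotientGroup.mk' W)).comap (QuotientGroup.mk' W) := by
      rw [← Subgroup.comap_sup_eq _ _ _ (QuotientGroup.mk'_surjective W), Subgroup.comap_map_eq,
        QuotientGroup.ker_mk', sup_comm (P : Subgroup G), ← sup_assoc, sup_eq_left.2 hWK]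
    rw [heq]
    exact hKP.comap _

theorem HasPLengthLeOne.of_quotient_of_not_dvd (hW : ¬ p ∣ Nat.card W)
    (h : HasPLengthLeOne (P.mapSurjective (QuotientGroup.mk'_surjective W))) :
    HasPLengthLeOne P := by
  obtain ⟨K, hK, hWK, hpK, hKP⟩ := h.exists_of_quotient
  refine ⟨K, hK, fun hdvd ↦ ?_, hKP⟩
  rw [← Subgroup.relIndex_ker, QuotientGroup.ker_mk'] at hpK
  rw [← Subgroup.relIndex_bot_left, ← Subgroup.relIndex_mul_relIndex ⊥ W K bot_le hWK,
    Subgroup.relIndex_bot_left] at hdvd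
  exact ((Fact.out : p.Prime).dvd_mul.1 hdvd).elim hW hpK

theorem HasPLengthLeOne.of_quotient_of_le_centralizer (hW : IsPGroup p W)
    (hPW : Subgroup.normalClosure (P : Set G) ≤ Subgroup.centralizer (W : Set G))
    (h : HasPLengthLeOne (P.mapSurjective (QuotientGroup.mk'_surjective W))) :
    HasPLengthLeOne P := by
  obtain ⟨K, _, hWK, hpK, hKP⟩ := h.exists_of_quotient
  set N := Subgroup.normalClosure (P : Set G)
  have hWP : W ≤ P := hW.le_sylow_of_normal P
  have hPN : (P : Subgroup G) ≤ N := Subgroup.subset_normalClosure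
  have hmod : K ⊓ N ⊔ P = (K ⊔ P) ⊓ N := by
    refine SetLike.coe_injective ?_
    rw [Subgroup.normal_mul, inf_comm, Subgroup.inf_mul_assoc _ _ _ hPN, Subgroup.coe_inf,
      Subgroup.normal_mul, Set.inter_comm]
  have hidx : ¬ p ∣ W.relIndex (K ⊓ N) := by
    have hker := Subgroup.relIndex_ker (K ⊓ N) (QuotientGroup.mk' W)
    rw [QuotientGroup.ker_mk'] at hker
    rw [hker]
    exact fun hdvd ↦ hpK (hdvd.trans (Subgroup.card_dvd_of_le (Subgroup.map_mono inf_le_left)))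
  obtain ⟨C, hC, hpC, hCW⟩ := exists_normal_sup_eq_of_le_centralizer p
    (le_inf hWK (hWP.trans hPN)) (inf_le_right.trans hPW) hW hidx
  refine ⟨C, hC, hpC, ?_⟩
  rw [← sup_eq_right.2 hWP, ← sup_assoc, hCW, hmod]
  infer_instance

end PLength

theorem hasPLengthLeOne_of_class_le_two {G : Type*} [Group G] [Finite G] [Group.IsSolvable G]
    {p : ℕ} [Fact p.Prime] (P : Sylow p G) (hP : (P : Subgroup G).lowerCentralSeries 2 = ⊥)
    (hodd : Odd (Nat.card (Subgroup.normalClosure (P : Set G)))) : HasPLengthLeOne P := by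
  induction hn : Nat.card G using Nat.strong_induction_on generalizing G with | _ n ih
  subst hn
  rcases subsingleton_or_nontrivial G with hG | hG
  · exact ⟨⊥, inferInstance, by simpa using (Fact.out : p.Prime).ne_one,
      ⟨fun x hx g ↦ by rwa [Subsingleton.elim (g * x * g⁻¹) x]⟩⟩
  obtain ⟨W, -, hW⟩ := exists_minimal_le_of_wellFoundedLT
    (fun M : Subgroup G ↦ M.Normal ∧ M ≠ ⊥) ⊤ ⟨inferInstance, top_ne_bot⟩
  have := hW.prop.1
  have hmk := QuotientGroup.mk'_surjective W
  have hlt : Nat.card (G ⧸ W) < Nat.card G := by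
    rw [W.card_eq_card_quotient_mul_card_subgroup]
    exact lt_mul_of_one_lt_right Nat.card_pos (W.one_lt_card_iff_ne_bot.2 hW.prop.2)
  have hquot : HasPLengthLeOne (P.mapSurjective hmk) := by
    refine ih _ hlt _ ?_ ?_ rfl
    · rw [Sylow.coe_mapSurjective, ← Subgroup.map_lowerCentralSeries, hP, Subgroup.map_bot]
    · have hmap := Subgroup.map_normalClosure (P : Set G) (QuotientGroup.mk' W) hmk
      exact hmap ▸ hodd.of_dvd_nat (Subgroup.card_map_dvd _ (QuotientGroup.mk' W))
  obtain ⟨r, hr, hWr⟩ := exists_prime_exponent_of_minimal hW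
  have hWr' : IsPGroup r W := IsPGroup.of_exponent_dvd_pow (n := 1) (by rw [hWr, pow_one])
  rcases eq_or_ne r p with rfl | hrp
  · exact hquot.of_quotient_of_le_centralizer hWr'
      (normalClosure_sylow_le_centralizer _ P hP hodd hW hWr)
  · refine hquot.of_quotient_of_not_dvd fun hdvd ↦ hrp ?_
    have : Fact r.Prime := ⟨hr⟩
    obtain ⟨n, hn⟩ := IsPGroup.iff_card.1 hWr'
    rw [hn] at hdvd
    exact ((Nat.prime_dvd_prime_iff_eq Fact.out hr).1
      ((Fact.out : p.Prime).dvd_of_dvd_pow hdvd)).symm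

section CommutatorSplitting

variable (P : Type*) [Group P]

/-- A bimultiplicative central form `β` on a group `P` (necessarily of class at most two) with
`⁅a, b⁆ = β(a, b) / β(b, a)`. Requiring its values to be products of commutators makes `β` vanish
on its own values. Such a form linearizes `P`: the operation `a + b = β(a, b)⁻¹ a b` is an abelian
group law. -/
structure CommutatorSplitting where
  form : P →* P →* Subgroup.center P
  form_mem_commutator (a b : P) : (form a b : P) ∈ commutator P
  commutator_eq (a b : P) : ⁅a, b⁆ = (form a b / form b a : Subgroup.center P)

namespace CommutatorSplitting

variable {P} (S : CommutatorSplitting P)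

theorem form_smul_left (a b c d : P) : S.form (S.form a b • c) d = S.form c d := by
  have h : S.form (S.form a b) = 1 :=
    Abelianization.commutator_subset_ker S.form (S.form_mem_commutator a b)
  rw [Subgroup.smul_def, smul_eq_mul, map_mul, h, one_mul]

theorem form_smul_right (a b c d : P) : S.form d (S.form a b • c) = S.form d c := by
  have h : S.form d (S.form a b) = 1 :=
    Abelianization.commutator_subset_ker (S.form d) (S.form_mem_commutator a b)
  rw [Subgroup.smul_def, smul_eq_mul, map_mul, h, one_mul]

theorem form_inv_smul_left (a b c d : P) : S.form ((S.form a b)⁻¹ • c) d = S.form c d := by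
  rw [← map_inv (S.form a), form_smul_left]

theorem form_inv_smul_right (a b c d : P) : S.form d ((S.form a b)⁻¹ • c) = S.form d c := by
  rw [← map_inv (S.form a), form_smul_right]

theorem form_inv_smul_mul_comm (a b : P) :
    (S.form a b)⁻¹ • (a * b) = (S.form b a)⁻¹ • (b * a) := by
  have h : a * b = (S.form a b / S.form b a) • (b * a) := by
    rw [Subgroup.smul_def, ← S.commutator_eq, smul_eq_mul, commutatorElement_def]
    group
  rw [h, smul_smul, ← mul_div_assoc, inv_mul_cancel, one_div]

/-- The underlying type of `P`, with the abelian group law `a + b = β(a, b)⁻¹ a b`. -/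
@[nolint unusedArguments]
def Linearization (_ : CommutatorSplitting P) : Type _ := P

/-- The tautological bijection from `P` to its linearization. -/
def toLin : P ≃ S.Linearization := Equiv.refl P

instance : Add S.Linearization :=
  ⟨fun v w ↦ S.toLin ((S.form (S.toLin.symm v) (S.toLin.symm w))⁻¹ •
    (S.toLin.symm v * S.toLin.symm w))⟩

instance : Zero S.Linearization := ⟨S.toLin 1⟩

instance : Neg S.Linearization :=
  ⟨fun v ↦ S.toLin ((S.form (S.toLin.symm v) (S.toLin.symm v))⁻¹ • (S.toLin.symm v)⁻¹)⟩

theorem toLin_one : S.toLin 1 = 0 := rfl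

theorem toLin_add (a b : P) : S.toLin a + S.toLin b = S.toLin ((S.form a b)⁻¹ • (a * b)) := rfl

theorem neg_toLin (a : P) : -S.toLin a = S.toLin ((S.form a a)⁻¹ • a⁻¹) := rfl

instance : AddCommGroup S.Linearization :=
  { AddGroup.ofLeftAxioms
      (S.toLin.surjective.forall₃.2 fun a b c ↦ by
        simp only [toLin_add, form_inv_smul_left, form_inv_smul_right, smul_mul_assoc,
          mul_smul_comm, smul_smul, map_mul, MonoidHom.mul_apply, mul_assoc, mul_inv]
        rw [← mul_assoc, mul_comm _ (S.form a b)⁻¹])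
      (S.toLin.surjective.forall.2 fun a ↦ by simp [← toLin_one, toLin_add])
      (S.toLin.surjective.forall.2 fun a ↦ by
        simp [neg_toLin, toLin_add, form_inv_smul_left, smul_mul_assoc, ← toLin_one]) with
    add_comm := S.toLin.surjective.forall₂.2 fun a b ↦ by
      rw [toLin_add, toLin_add, form_inv_smul_mul_comm] }

/-- The automorphism `φ` of `P` preserves the form `β`. -/
def IsInvariant (φ : MulAut P) : Prop :=
  ∀ a b, (S.form (φ a) (φ b) : P) = φ (S.form a b)

variable {S} in
theorem IsInvariant.map_form_smul {φ : MulAut P} (hφ : S.IsInvariant φ) (a b c : P) :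
    φ (S.form a b • c) = S.form (φ a) (φ b) • φ c := by
  simp only [Subgroup.smul_def, smul_eq_mul, map_mul, hφ a b]

variable {S} in
theorem IsInvariant.map_form_inv_smul {φ : MulAut P} (hφ : S.IsInvariant φ) (a b c : P) :
    φ ((S.form a b)⁻¹ • c) = (S.form (φ a) (φ b))⁻¹ • φ c := by
  rw [← map_inv (S.form a), hφ.map_form_smul, map_inv, map_inv]

variable {G : Type*} [Group G] {τ : G →* MulAut P} {π : G → P}

/-- Multiplication in `P` is `a * b = a + λ_a(b)` with `λ_a(b) = β(a, b) b`. A crossed homomorphism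
`π : G → P` therefore becomes a cocycle for the action of `g ∈ G` through `λ_{π(g)} ∘ τ(g)`. -/
@[reducible]
def distribMulAction (hτ : ∀ g, S.IsInvariant (τ g))
    (hπ : ∀ g h, π (g * h) = π g * τ g (π h)) : DistribMulAction G S.Linearization :=
  { smul g v := S.toLin (S.form (π g) (τ g (S.toLin.symm v)) • τ g (S.toLin.symm v))
    one_smul v := by
      have hπ1 : π 1 = 1 := by simpa using hπ 1 1
      change S.toLin (S.form (π 1) (τ 1 (S.toLin.symm v)) • τ 1 (S.toLin.symm v)) = v
      simp [hπ1]
    mul_smul g h := S.toLin.surjective.forall.2 fun a ↦ by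
      change S.toLin (S.form (π (g * h)) (τ (g * h) a) • τ (g * h) a) = S.toLin (S.form (π g)
        (τ g (S.form (π h) (τ h a) • τ h a)) • τ g (S.form (π h) (τ h a) • τ h a))
      simp only [(hτ g).map_form_smul, form_smul_right, smul_smul, hπ, map_mul, MonoidHom.mul_apply,
        MulAut.mul_apply]
    smul_zero g := by
      change S.toLin (S.form (π g) (τ g 1) • τ g 1) = S.toLin 1
      simp only [map_one, one_smul]
    smul_add g := S.toLin.surjective.forall₂.2 fun a b ↦ by
      change S.toLin (S.form (π g) (τ g ((S.form a b)⁻¹ • (a * b))) •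
        τ g ((S.form a b)⁻¹ • (a * b))) = S.toLin (S.form (π g) (τ g a) • τ g a) +
          S.toLin (S.form (π g) (τ g b) • τ g b)
      simp only [toLin_add, (hτ g).map_form_inv_smul, form_inv_smul_right, form_smul_left,
        form_smul_right, smul_smul, map_mul, smul_mul_assoc, mul_smul_comm]
      rw [mul_comm, mul_comm (S.form (π g) (τ g a))] }

theorem isCocycle₁_toLin (hτ : ∀ g, S.IsInvariant (τ g))
    (hπ : ∀ g h, π (g * h) = π g * τ g (π h)) :
    letI := S.distribMulAction hτ hπ
    groupCohomology.IsCocycle₁ fun g ↦ S.toLin (π g) := by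
  let := S.distribMulAction hτ hπ
  intro g h
  rw [add_comm]
  change _ = S.toLin (π g) + S.toLin (S.form (π g) (τ g (π h)) • τ g (π h))
  simp only [toLin_add, hπ, form_smul_right, mul_smul_comm, inv_smul_smul]

end CommutatorSplitting

variable {P}

/-- The commutator of a group of class at most two, as a bimultiplicative map into the center. -/
def commutatorPairing (h : commutator P ≤ Subgroup.center P) : P →* P →* Subgroup.center P :=
  have hmem (a b : P) : ⁅a, b⁆ ∈ Subgroup.center P :=
    h (Subgroup.commutator_mem_commutator (Subgroup.mem_top a) (Subgroup.mem_top b))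
  have hcomm (a b c : P) : Commute c ⁅a, b⁆ := Subgroup.mem_center_iff.1 (hmem a b) c
  MonoidHom.mk' (fun a ↦ MonoidHom.mk' (fun b ↦ ⟨⁅a, b⁆, hmem a b⟩) fun b c ↦ Subtype.ext <| by
      change ⁅a, b * c⁆ = ⁅a, b⁆ * ⁅a, c⁆
      rw [commutatorElement_mul_right_eq_mul_conj, mul_assoc, mul_assoc, (hcomm a c b⁻¹).symm.eq,
        mul_inv_cancel_left])
    fun a b ↦ MonoidHom.ext fun c ↦ Subtype.ext <| by
      change ⁅a * b, c⁆ = ⁅a, c⁆ * ⁅b, c⁆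
      rw [commutatorElement_mul_left_eq_conj_mul, (hcomm b c a).eq, mul_inv_cancel_right,
        (hcomm a c _).eq]

theorem coe_commutatorPairing (h : commutator P ≤ Subgroup.center P) (a b : P) :
    (commutatorPairing h a b : P) = ⁅a, b⁆ := rfl

theorem commutatorPairing_swap (h : commutator P ≤ Subgroup.center P) (a b : P) :
    (commutatorPairing h a b)⁻¹ = commutatorPairing h b a :=
  Subtype.ext (commutatorElement_inv a b)

theorem exists_commutatorSplitting_of_odd (h : commutator P ≤ Subgroup.center P)
    (hodd : Odd (Nat.card P)) : ∃ S : CommutatorSplitting P, ∀ φ : MulAut P, S.IsInvariant φ := by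
  obtain ⟨k, hk⟩ := hodd
  -- Since `|P| = 2k + 1`, raising to the power `k + 1` extracts square roots.
  have hpow (z : Subgroup.center P) : z ^ (k + 1) * z ^ (k + 1) = z := by
    have hz : z ^ Nat.card P = 1 :=
      Subtype.ext (by rw [Subgroup.coe_pow]; exact pow_card_eq_one')
    rw [← pow_add, show k + 1 + (k + 1) = Nat.card P + 1 by lia, pow_succ, hz, one_mul]
  refine ⟨⟨commutatorPairing h ^ (k + 1), fun a b ↦ ?_, fun a b ↦ ?_⟩, fun φ a b ↦ ?_⟩
  · exact pow_mem (Subgroup.commutator_mem_commutator (Subgroup.mem_top a) (Subgroup.mem_top b)) _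
  · simp only [MonoidHom.pow_apply, ← commutatorPairing_swap h a b, inv_pow, div_inv_eq_mul, hpow,
      coe_commutatorPairing]
  · simp only [MonoidHom.pow_apply, Subgroup.coe_pow, coe_commutatorPairing, map_pow,
      map_commutatorElement]

section Alternating

variable {B Z : Type*} [CommGroup B] [CommGroup Z]

theorem inv_eq_swap_of_alternating {ω : B →* B →* Z} (alt : ∀ b, ω b b = 1) (a b : B) :
    (ω a b)⁻¹ = ω b a := by
  have h := alt (a * b)
  rw [map_mul, map_mul, MonoidHom.mul_apply, MonoidHom.mul_apply, alt, alt, one_mul, mul_one] at h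
  exact inv_eq_of_mul_eq_one_left h

theorem eq_one_of_alternating_of_mem_zpowers {ω : B →* B →* Z} (alt : ∀ b, ω b b = 1) {g a b : B}
    (ha : a ∈ Subgroup.zpowers g) (hb : b ∈ Subgroup.zpowers g) : ω a b = 1 := by
  obtain ⟨k, rfl⟩ := ha
  obtain ⟨l, rfl⟩ := hb
  simp only [map_zpow, MonoidHom.zpow_apply, alt, one_zpow]

theorem exists_cyclic_projections (B : Type*) [CommGroup B] [Finite B] :
    ∃ (m : ℕ) (π : Fin m → B →* B), (∀ b, ∏ i, π i b = b) ∧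
      ∀ i, ∃ g, ∀ b, π i b ∈ Subgroup.zpowers g := by
  classical
  obtain ⟨ι, _, n, -, ⟨e⟩⟩ := CommGroup.equiv_prod_multiplicative_zmod_of_finite B
  let E := Fintype.equivFin ι
  let π (i : ι) : B →* B := e.symm.toMonoidHom.comp
    ((MonoidHom.mulSingle _ i).comp ((Pi.evalMonoidHom _ i).comp e.toMonoidHom))
  have hπ (i b) : π i b = e.symm (Pi.mulSingle i (e b i)) := rfl
  refine ⟨_, fun i ↦ π (E.symm i), fun b ↦ ?_, fun i ↦
    ⟨e.symm (Pi.mulSingle (E.symm i) (.ofAdd 1)), fun b ↦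
      ⟨((e b (E.symm i)).toAdd.cast : ℤ), ?_⟩⟩⟩
  · rw [E.symm.prod_comp fun i ↦ π i b]
    simp only [hπ, ← map_prod, Finset.univ_prod_mulSingle, MulEquiv.symm_apply_apply]
  · simp only [hπ]
    rw [← map_zpow, ← Pi.mulSingle_zpow, ← ofAdd_zsmul, zsmul_one, ZMod.intCast_zmod_cast,
      ofAdd_toAdd]

theorem exists_split_of_alternating [Finite B] {ω : B →* B →* Z} (alt : ∀ b, ω b b = 1) :
    ∃ F : B →* B →* Z, (∀ a b, ω a b = F a b / F b a) ∧
      ∀ S : Subgroup Z, (∀ a b, ω a b ∈ S) → ∀ a b, F a b ∈ S := by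
  obtain ⟨m, π, hπ, hcyc⟩ := exists_cyclic_projections B
  -- The strictly upper triangular part of `ω`.
  let F : B →* B →* Z := ∏ i, ∏ j, if i < j then (ω.comp (π i)).compl₂ (π j) else 1
  have hF (a b) : F a b = ∏ i, ∏ j, if i < j then ω (π i a) (π j b) else 1 := by
    simp only [F, MonoidHom.finsetProd_apply]
    refine Finset.prod_congr rfl fun i _ ↦ Finset.prod_congr rfl fun j _ ↦ ?_
    split_ifs <;> rfl
  have hω (a b) : ω a b = ∏ i, ∏ j, ω (π i a) (π j b) := by
    simp only [← map_prod, hπ, ← MonoidHom.finsetProd_apply]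
  refine ⟨F, fun a b ↦ ?_, fun S hS a b ↦ ?_⟩
  · rw [hω, hF, hF b, Finset.prod_comm (f := fun i j ↦ if i < j then ω (π i b) (π j a) else 1),
      ← Finset.prod_div_distrib]
    refine Finset.prod_congr rfl fun i _ ↦ ?_
    rw [← Finset.prod_div_distrib]
    refine Finset.prod_congr rfl fun j _ ↦ ?_
    obtain hij | rfl | hij := lt_trichotomy i j
    · rw [if_pos hij, if_neg hij.not_gt, div_one]
    · obtain ⟨g, hg⟩ := hcyc i
      rw [if_neg (lt_irrefl i), if_neg (lt_irrefl i), div_one,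
        eq_one_of_alternating_of_mem_zpowers alt (hg a) (hg b)]
    · rw [if_neg hij.not_gt, if_pos hij, one_div, inv_eq_swap_of_alternating alt]
  · rw [hF]
    refine prod_mem fun i _ ↦ prod_mem fun j _ ↦ ?_
    split_ifs
    exacts [hS _ _, one_mem S]

end Alternating

theorem nonempty_commutatorSplitting [Finite P] (h : commutator P ≤ Subgroup.center P) :
    Nonempty (CommutatorSplitting P) := by
  let ω : Abelianization P →* Abelianization P →* Subgroup.center P :=
    (Abelianization.lift (Abelianization.lift (commutatorPairing h)).flip).flip
  have hω (a b : P) : ω (.of a) (.of b) = commutatorPairing h a b := rfl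
  have alt : ∀ b, ω b b = 1 := QuotientGroup.mk_surjective.forall.2 fun b ↦
    (hω b b).trans (Subtype.ext (commutatorElement_self b))
  obtain ⟨F, hF, hmem⟩ := exists_split_of_alternating alt
  refine ⟨(F.comp Abelianization.of).compl₂ Abelianization.of, fun a b ↦ ?_, fun a b ↦ ?_⟩
  · refine hmem ((commutator P).subgroupOf (Subgroup.center P))
      (QuotientGroup.mk_surjective.forall₂.2 fun x y ↦ ?_) _ _
    exact Subgroup.commutator_mem_commutator (Subgroup.mem_top x) (Subgroup.mem_top y)
  · exact congrArg Subtype.val (hF (.of a) (.of b))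

end CommutatorSplitting

section Cocycle

open groupCohomology

theorem isIYB_of_bijective_isCocycle₁ {G A : Type*} [Group G] [AddCommGroup A]
    [DistribMulAction G A] {f : G → A} (hf : IsCocycle₁ f) (hbij : Function.Bijective f) :
    IsIYB G := by
  let e : G ≃ A := Equiv.ofBijective f hbij
  have he (g h : G) : e (g * h) = g • e h + e g := hf g h
  refine ⟨fun a b ↦ e.symm (e a + e b), fun a ↦ e.symm (-e a), e.symm 0, fun a b ↦ ?_,
    fun a b c ↦ ?_, fun a ↦ ?_, fun a ↦ ?_, fun a b c ↦ ?_⟩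
  · exact congrArg e.symm (add_comm _ _)
  · simp only [Equiv.apply_symm_apply, add_assoc]
  · simp only [Equiv.apply_symm_apply, zero_add, Equiv.symm_apply_apply]
  · simp only [Equiv.apply_symm_apply, neg_add_cancel]
  · apply e.injective
    simp only [he, Equiv.apply_symm_apply, smul_add]
    abel

theorem injective_of_isCocycle₁ {G A : Type*} [Group G] [Finite G] [AddCommGroup A]
    [DistribMulAction G A] {f : G → A} (hf : IsCocycle₁ f)
    (hprime : ∀ g, f g = 0 → ¬ (orderOf g).Prime) : Function.Injective f := by
  have hker (g : G) (hg : f g = 0) : g = 1 := by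
    have hpow (n : ℕ) : f (g ^ n) = 0 := by
      induction n with
      | zero => rw [pow_zero, map_one_of_isCocycle₁ hf]
      | succ n ih => rw [pow_succ, hf, hg, ih, smul_zero, add_zero]
    by_contra hne
    obtain ⟨p, hp, hdvd⟩ := Nat.exists_prime_and_dvd (mt orderOf_eq_one_iff.1 hne)
    refine hprime _ (hpow (orderOf g / p)) ?_
    rwa [orderOf_pow_orderOf_div (orderOf_pos g).ne' hdvd]
  intro a b hab
  refine inv_mul_eq_one.1 (hker _ ?_)
  rw [hf, ← hab, ← smul_inv_smul a⁻¹ (f a⁻¹), inv_inv, map_inv_of_isCocycle₁ hf, smul_neg,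
    add_neg_cancel]

universe u

/-- `G` has a cocycle with values in a `G`-module whose order is the `p`-part of `|G|`, and with no
element of order `p` in its kernel. Such cocycles for all `p` combine to a bijective cocycle. -/
def HasSylowCocycle (p : ℕ) (G : Type u) [Group G] : Prop :=
  ∃ (A : Type u) (_ : AddCommGroup A) (_ : DistribMulAction G A) (f : G → A), IsCocycle₁ f ∧
    Nat.card A = p ^ (Nat.card G).factorization p ∧ ∀ g, f g = 0 → orderOf g ≠ p

variable {G : Type u} [Group G] [Finite G]

theorem isIYB_of_hasSylowCocycle (h : ∀ p : ℕ, p.Prime → HasSylowCocycle p G) : IsIYB G := by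
  choose A _ _ f hf hcard hker using
    fun p : (Nat.card G).primeFactors ↦ h p (Nat.prime_of_mem_primeFactors p.2)
  let F (g : G) : ∀ p, A p := fun p ↦ f p g
  have hF : IsCocycle₁ F := fun g h ↦ funext fun p ↦ hf p g h
  have hinj : Function.Injective F := injective_of_isCocycle₁ hF fun g hg hp ↦
    hker ⟨orderOf g, Nat.mem_primeFactors.2 ⟨hp, orderOf_dvd_natCard g, Nat.card_pos.ne'⟩⟩ g
      (congrFun hg _) rfl
  have hcardA : Nat.card (∀ p, A p) = Nat.card G := by
    rw [Nat.card_pi, Finset.prod_congr rfl fun p _ ↦ hcard p,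
      Finset.prod_coe_sort _ fun p ↦ p ^ (Nat.card G).factorization p]
    exact Nat.prod_factorization_pow_eq_self Nat.card_pos.ne'
  have : Finite (∀ p, A p) := Nat.finite_of_card_ne_zero (hcardA.trans_ne Nat.card_pos.ne')
  exact isIYB_of_bijective_isCocycle₁ hF
    ((Nat.bijective_iff_injective_and_card F).2 ⟨hinj, hcardA.symm⟩)

variable {p : ℕ} [Fact p.Prime]

theorem HasSylowCocycle.of_quotient {K : Subgroup G} [K.Normal] (hK : ¬ p ∣ Nat.card K)
    (h : HasSylowCocycle p (G ⧸ K)) : HasSylowCocycle p G := by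
  obtain ⟨A, _, _, f, hf, hcard, hker⟩ := h
  let := DistribMulAction.compHom A (QuotientGroup.mk' K)
  refine ⟨A, inferInstance, inferInstance, fun g ↦ f g, fun g h ↦ hf g h, ?_, fun g hg hp ↦ ?_⟩
  · rw [hcard, K.card_eq_card_quotient_mul_card_subgroup,
      Nat.factorization_mul Nat.card_pos.ne' Nat.card_pos.ne', Finsupp.add_apply,
      Nat.factorization_eq_zero_of_not_dvd hK, add_zero]
  · have hdvd : orderOf (g : G ⧸ K) ∣ p := hp ▸ orderOf_map_dvd (QuotientGroup.mk' K) g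
    have hgK : g ∈ K := (QuotientGroup.eq_one_iff g).1 <| orderOf_eq_one_iff.1 <|
      ((Nat.dvd_prime Fact.out).1 hdvd).resolve_right (hker g hg)
    exact hK (hp ▸ K.orderOf_dvd_natCard hgK)

namespace CommutatorSplitting

theorem isInvariant_conj {P : Type*} [Group P] (S : CommutatorSplitting P) (x : P) :
    S.IsInvariant (MulAut.conj x) := fun a b ↦ by
  rw [MulAut.conj_apply x (S.form a b), Subgroup.mem_center_iff.1 (S.form a b).2 x,
    mul_inv_cancel_right]
  simp only [MulAut.conj_apply, map_mul, map_inv, mul_inv_cancel_comm]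

theorem hasSylowCocycle {P : Sylow p G} [(P : Subgroup G).Normal]
    (S : CommutatorSplitting P) (hS : ∀ g : G, S.IsInvariant (MulAut.conjNormal g)) :
    HasSylowCocycle p G := by
  obtain ⟨C, hC⟩ := Subgroup.exists_right_complement'_of_coprime P.card_coprime_index
  let e := SemidirectProduct.mulEquivSubgroup hC
  let τ : G →* MulAut P := MulAut.conjNormal.comp
    (C.subtype.comp (SemidirectProduct.rightHom.comp e.symm.toMonoidHom))
  have hτ (g) : S.IsInvariant (τ g) := hS _
  have hπ (g h : G) : (e.symm (g * h)).left = (e.symm g).left * τ g (e.symm h).left := by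
    rw [map_mul, SemidirectProduct.mul_left]
    rfl
  refine ⟨S.Linearization, inferInstance, S.distribMulAction hτ hπ, _,
    S.isCocycle₁_toLin (π := fun g ↦ (e.symm g).left) hτ hπ, P.card_eq_multiplicity,
    fun g hg hp ↦ P.not_dvd_index ?_⟩
  have hgC : g ∈ C := by
    have hg1 : (e.symm g).left = 1 := hg
    have hg2 : g = ((e.symm g).left : G) * (e.symm g).right := (e.apply_symm_apply g).symm
    rw [hg2, hg1, Subgroup.coe_one, one_mul]
    exact (e.symm g).right.2
  rw [hC.symm.index_eq_card, ← hp]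
  exact C.orderOf_dvd_natCard hgC

end CommutatorSplitting

theorem commutator_le_center_of_class_le_two {G : Type*} [Group G] {H : Subgroup G}
    (hH : H.lowerCentralSeries 2 = ⊥) : commutator H ≤ Subgroup.center H := by
  rw [← Subgroup.commutator_top_right_eq_bot_iff_le_center]
  refine Subgroup.map_injective H.subtype_injective ?_
  rw [Subgroup.map_bot, ← hH]
  exact Subgroup.top_subtype_lowerCentralSeries H 2

theorem hasSylowCocycle_of_hasPLengthLeOne (hp : p ≠ 2) {P : Sylow p G}
    (hP : (P : Subgroup G).lowerCentralSeries 2 = ⊥) (hlen : HasPLengthLeOne P) :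
    HasSylowCocycle p G := by
  obtain ⟨K, _, hpK, hKP⟩ := hlen
  have hmk := QuotientGroup.mk'_surjective K
  let Q : Sylow p (G ⧸ K) := P.mapSurjective hmk
  have hQ : (Q : Subgroup (G ⧸ K)).Normal := by
    have h := hKP.map _ hmk
    rwa [Subgroup.map_sup, (Subgroup.map_eq_bot_iff K).2 (QuotientGroup.ker_mk' K).ge,
      bot_sup_eq] at h
  have hclass : (Q : Subgroup (G ⧸ K)).lowerCentralSeries 2 = ⊥ := by
    rw [Sylow.coe_mapSurjective, ← Subgroup.map_lowerCentralSeries, hP, Subgroup.map_bot]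
  obtain ⟨S, hS⟩ := exists_commutatorSplitting_of_odd (commutator_le_center_of_class_le_two hclass)
    (Q.card_eq_multiplicity ▸ ((Fact.out : p.Prime).odd_of_ne_two hp).pow)
  exact (S.hasSylowCocycle fun g ↦ hS _).of_quotient hpK

theorem hasSylowCocycle_of_normal_complement {P : Sylow p G}
    (hP : (P : Subgroup G).lowerCentralSeries 2 = ⊥) {K : Subgroup G} [K.Normal]
    (hpK : ¬ p ∣ Nat.card K) (hK : IsPGroup p (G ⧸ K)) : HasSylowCocycle p G := by
  have hmk := QuotientGroup.mk'_surjective K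
  let Q : Sylow p (G ⧸ K) := P.mapSurjective hmk
  have hQ : (Q : Subgroup (G ⧸ K)) = ⊤ := (Q.is_maximal' (hK.to_subgroup ⊤) le_top).symm
  have : (Q : Subgroup (G ⧸ K)).Normal := hQ ▸ inferInstance
  have hclass : (Q : Subgroup (G ⧸ K)).lowerCentralSeries 2 = ⊥ := by
    rw [Sylow.coe_mapSurjective, ← Subgroup.map_lowerCentralSeries, hP, Subgroup.map_bot]
  obtain ⟨S⟩ := nonempty_commutatorSplitting (commutator_le_center_of_class_le_two hclass)
  refine (S.hasSylowCocycle fun g ↦ ?_).of_quotient hpK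
  lift g to (Q : Subgroup (G ⧸ K)) using hQ ▸ Subgroup.mem_top g
  rw [MulAut.conjNormal_val]
  exact S.isInvariant_conj g

end Cocycle

/-- a finite soluble `2`-nilpotent group (one possessing a normal
Hall `2'`-subgroup, i.e. a normal `2`-complement) all of whose Sylow subgroups have
nilpotency class at most `2` is an IYB-group. -/
theorem isIYB_of_two_nilpotent
    {G : Type*} [Group G] [Finite G] (hsol : IsSolvable G)
    (hSyl : ∀ p : ℕ, p.Prime → ∀ P : Sylow p G,
      lowerCentralSeries (P : Subgroup G) 2 = ⊥)
    (h2nil : ∃ H : Subgroup G, H.Normal ∧ Odd (Nat.card H) ∧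
      ∃ n : ℕ, H.index = 2 ^ n) :
    IsIYB G := by
  obtain ⟨H, hH, hodd, n, hn⟩ := h2nil
  refine isIYB_of_hasSylowCocycle fun p hp ↦ ?_
  have : Fact p.Prime := ⟨hp⟩
  have : Group.IsSolvable G := hsol
  let P : Sylow p G := default
  obtain rfl | hp2 := eq_or_ne p 2
  · exact hasSylowCocycle_of_normal_complement (hSyl 2 hp P) hodd.not_two_dvd_nat
      (IsPGroup.of_card hn)
  · have hPH : (P : Subgroup G) ≤ H := by
      refine le_of_coprime_card_index ?_
      rw [P.card_eq_multiplicity, hn]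
      exact Nat.Coprime.pow _ _ ((Nat.coprime_primes hp Nat.prime_two).2 hp2)
    have hPodd : Odd (Nat.card (Subgroup.normalClosure (P : Set G))) :=
      hodd.of_dvd_nat (Subgroup.card_dvd_of_le (Subgroup.normalClosure_le_normal hPH))
    exact hasSylowCocycle_of_hasPLengthLeOne hp2 (hSyl p hp P)
      (hasPLengthLeOne_of_class_le_two P (hSyl p hp P) hPodd)
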